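/- For every natural number p ≥ 4, setting r = p(p−1)/2, the number of non-chordal simple graphs on Fin p having exactly r − 2 edges equals the number of non-chordal simple graphs on Fin p having exactly 4 edges; both equal 3 · C(p,4). (Paper's Lemma 2, part 2: F_{p,r−2} = F_{p,4}.) -/

import Mathlib

/-- A simple graph is chordal ("decomposable") if for every `n ≥ 4` there is no
graph embedding (induced subgraph copy) of the `n`-cycle into it. -/
def IsChordal {V : Type*} (G : SimpleGraph V) : Prop :=
  ∀ n : ℕ, 4 ≤ n → IsEmpty (SimpleGraph.cycleGraph n ↪g G)

/-- `Fcount p k` is the number of non-chordal simple graphs on `Fin p` with exactly `k` edges. -/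
noncomputable def Fcount (p k : ℕ) : ℕ :=
  Nat.card {G : SimpleGraph (Fin p) // G.edgeSet.ncard = k ∧ ¬ IsChordal G}

/-!
A cycle of length `n` has `n` edges, so a non-chordal graph with four edges is a 4-cycle plus
isolated vertices. If a non-chordal graph misses only two edges, then its complement has two edges
and contains the complement of an `n`-cycle, which has `n (n - 3) / 2` edges; hence again `n = 4`,
and the complement consists of two disjoint edges plus isolated vertices. Two placements of a graph
without isolated vertices have the same image exactly when they differ by an automorphism. The
4-cycle and its complement have the same automorphism group, of order 8, so both have
`p (p - 1) (p - 2) (p - 3) / 8 = 3 * p.choose 4` copies on `p` vertices.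
-/

open SimpleGraph

section EdgeCount

variable {V W : Type*}

lemma ncard_edgeSet_map (H : SimpleGraph W) (f : W ↪ V) :
    (H.map f).edgeSet.ncard = H.edgeSet.ncard := by
  rw [edgeSet_map, Set.ncard_image_of_injective _ f.sym2Map.injective]

lemma ncard_edgeSet_le_of_isContained [Finite V] {H : SimpleGraph W} {G : SimpleGraph V}
    (h : H ⊑ G) : H.edgeSet.ncard ≤ G.edgeSet.ncard := by
  obtain ⟨f⟩ := h
  exact Nat.card_le_card_of_injective f.mapEdgeSet f.mapEdgeSet.injective

lemma ncard_edgeSet_add_ncard_edgeSet_compl [Finite V] (G : SimpleGraph V) :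
    G.edgeSet.ncard + Gᶜ.edgeSet.ncard = (Nat.card V).choose 2 := by
  classical
  have := Fintype.ofFinite V
  rw [← Set.ncard_union_eq (disjoint_edgeSet.2 disjoint_compl_right), ← edgeSet_sup,
    sup_compl_eq_top, ← coe_edgeFinset, Set.ncard_coe_finset,
    card_edgeFinset_top_eq_card_choose_two, Nat.card_eq_fintype_card]

lemma ncard_edgeSet_cycleGraph {n : ℕ} (hn : 3 ≤ n) : (cycleGraph n).edgeSet.ncard = n := by
  obtain ⟨m, rfl⟩ := Nat.exists_eq_add_of_le' hn
  have handshake := (cycleGraph (m + 3)).sum_degrees_eq_twice_card_edges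
  simp only [cycleGraph_degree_three_le, Finset.sum_const, Finset.card_univ, Fintype.card_fin,
    smul_eq_mul] at handshake
  rw [← coe_edgeFinset, Set.ncard_coe_finset]
  lia

lemma add_ncard_edgeSet_compl_cycleGraph {n : ℕ} (hn : 3 ≤ n) :
    n + (cycleGraph n)ᶜ.edgeSet.ncard = n.choose 2 := by
  simpa only [ncard_edgeSet_cycleGraph hn, Nat.card_fin] using
    ncard_edgeSet_add_ncard_edgeSet_compl (cycleGraph n)

lemma ncard_edgeSet_compl_cycleGraph_four : (cycleGraph 4)ᶜ.edgeSet.ncard = 2 :=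
  Nat.add_left_cancel (add_ncard_edgeSet_compl_cycleGraph (n := 4) (by decide))

lemma two_lt_ncard_edgeSet_compl_cycleGraph {n : ℕ} (hn : 5 ≤ n) :
    2 < (cycleGraph n)ᶜ.edgeSet.ncard := by
  have hsum := add_ncard_edgeSet_compl_cycleGraph (n := n) (by lia)
  have hchoose : 2 * n ≤ n.choose 2 := by
    rw [Nat.choose_two_right, Nat.le_div_iff_mul_le two_pos]
    calc 2 * n * 2 = n * 4 := by ring
      _ ≤ n * (n - 1) := Nat.mul_le_mul_left n (by lia)
  lia

end EdgeCount

section Copies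

variable {V W : Type*} {H : SimpleGraph W}

/-- The graphs on `V` that consist of a copy of `H` and isolated vertices: the images of `H` under
all placements of its vertices in `V`. -/
def copiesOn (H : SimpleGraph W) (V : Type*) : Set (SimpleGraph V) :=
  Set.range fun f : W ↪ V ↦ H.map f

lemma mem_copiesOn_iff [Finite V] {G : SimpleGraph V} :
    G ∈ copiesOn H V ↔ G.edgeSet.ncard = H.edgeSet.ncard ∧ H ⊴ G := by
  constructor
  · rintro ⟨f, rfl⟩
    exact ⟨ncard_edgeSet_map H f, ⟨Embedding.map f H⟩⟩
  · rintro ⟨hcard, ⟨e⟩⟩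
    have hle : H.map e.toEmbedding ≤ G := map_le_iff_le_comap _ _ _ |>.2 e.comap_eq.ge
    refine ⟨e.toEmbedding, edgeSet_injective ?_⟩
    exact Set.eq_of_subset_of_ncard_le (edgeSet_mono hle)
      (by rw [hcard, ncard_edgeSet_map]) (Set.toFinite _)

lemma map_trans_iso (σ : H ≃g H) (f : W ↪ V) :
    H.map (σ.toEquiv.toEmbedding.trans f) = H.map f := by
  have hσ : H.map σ = H :=
    (map_symm H σ.symm.toEquiv).trans σ.symm.toEmbedding.comap_eq
  rw [Function.Embedding.coe_trans, ← map_map]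
  exact congrArg (SimpleGraph.map f) hσ

lemma exists_iso_of_map_eq_map (hH : H.support = Set.univ) {f g : W ↪ V}
    (h : H.map g = H.map f) : ∃ σ : H ≃g H, σ.toEquiv.toEmbedding.trans f = g := by
  have hrange : Set.range g = Set.range f := by
    simpa only [support_map, hH, Set.image_univ] using congrArg support h
  let σ : W ≃ W := (Equiv.ofInjective g g.injective).trans
    ((Equiv.setCongr hrange).trans (Equiv.ofInjective f f.injective).symm)
  have hσ (w : W) : f (σ w) = g w := Equiv.apply_ofInjective_symm f.injective _
  refine ⟨⟨σ, fun {a b} ↦ ?_⟩, DFunLike.ext _ _ hσ⟩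
  rw [← map_adj_apply (f := f), hσ, hσ, ← h, map_adj_apply]

/-- The placements of `H` with the same image as `f` correspond to the automorphisms of `H`: any two
of them differ by a unique automorphism. -/
noncomputable def isoEquivMapFiber (hH : H.support = Set.univ) (f : W ↪ V) :
    (H ≃g H) ≃ {g : W ↪ V // H.map g = H.map f} :=
  Equiv.ofBijective (fun σ ↦ ⟨σ.toEquiv.toEmbedding.trans f, map_trans_iso σ f⟩) <| by
    refine ⟨fun σ τ h ↦ ?_, fun ⟨g, hg⟩ ↦ ?_⟩
    · ext w
      exact f.injective (DFunLike.congr_fun (congrArg Subtype.val h) w)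
    · obtain ⟨σ, hσ⟩ := exists_iso_of_map_eq_map hH hg
      exact ⟨σ, Subtype.ext hσ⟩

theorem ncard_copiesOn_mul_card_iso (hH : H.support = Set.univ) :
    (copiesOn H V).ncard * Nat.card (H ≃g H) = Nat.card (W ↪ V) := by
  let image (f : W ↪ V) : copiesOn H V := ⟨H.map f, f, rfl⟩
  have hfiber (G : copiesOn H V) : Nonempty ({f // image f = G} ≃ (H ≃g H)) := by
    obtain ⟨_, f, rfl⟩ := G
    exact ⟨(Equiv.subtypeEquivRight fun _ ↦ Subtype.ext_iff).trans (isoEquivMapFiber hH f).symm⟩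
  let e : (W ↪ V) ≃ copiesOn H V × (H ≃g H) :=
    (Equiv.sigmaFiberEquiv image).symm.trans
      (Equiv.sigmaEquivProdOfEquiv fun G ↦ (hfiber G).some)
  rw [Nat.card_congr e, Nat.card_prod, Nat.card_coe_set_eq]

lemma ncard_copiesOn_eq_three_mul_choose [Finite V] (hW : Nat.card W = 4)
    (hH : H.support = Set.univ) (haut : Nat.card (H ≃g H) = 8) :
    (copiesOn H V).ncard = 3 * (Nat.card V).choose 4 := by
  have := Fintype.ofFinite V
  have : Finite W := Nat.finite_of_card_ne_zero (by lia)
  have := Fintype.ofFinite W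
  have hcount : (copiesOn H V).ncard * 8 = 24 * (Nat.card V).choose 4 := by
    rw [← haut, ncard_copiesOn_mul_card_iso hH, Nat.card_eq_fintype_card,
      Fintype.card_embedding_eq, ← Nat.card_eq_fintype_card, ← Nat.card_eq_fintype_card, hW,
      Nat.descFactorial_eq_factorial_mul_choose]
    rfl
  lia

lemma card_iso_compl (H : SimpleGraph W) : Nat.card (Hᶜ ≃g Hᶜ) = Nat.card (H ≃g H) := by
  refine Nat.card_congr ⟨fun σ ↦ ⟨σ.toEquiv, ?_⟩, fun σ ↦ ⟨σ.toEquiv, ?_⟩, fun _ ↦ rfl, fun _ ↦ rfl⟩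
  · exact (Embedding.complEquiv.symm σ.toEmbedding).map_rel_iff
  · exact (Embedding.complEquiv σ.toEmbedding).map_rel_iff

end Copies

section FourCycle

lemma card_iso_cycleGraph_four : Nat.card (cycleGraph 4 ≃g cycleGraph 4) = 8 := by
  let e : (cycleGraph 4 ≃g cycleGraph 4) ≃
      {σ : Equiv.Perm (Fin 4) //
        ∀ a b, (cycleGraph 4).Adj (σ a) (σ b) ↔ (cycleGraph 4).Adj a b} :=
    ⟨fun σ ↦ ⟨σ.toEquiv, fun _ _ ↦ σ.map_rel_iff⟩, fun σ ↦ ⟨σ.1, σ.2 _ _⟩,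
      fun _ ↦ rfl, fun _ ↦ rfl⟩
  rw [Nat.card_congr e, Nat.card_eq_fintype_card]
  decide +kernel

lemma support_cycleGraph_four : (cycleGraph 4).support = Set.univ := by
  simp only [Set.eq_univ_iff_forall, mem_support]
  decide

lemma support_compl_cycleGraph_four : (cycleGraph 4)ᶜ.support = Set.univ := by
  simp only [Set.eq_univ_iff_forall, mem_support]
  decide

variable {V : Type*}

lemma ncard_copiesOn_cycleGraph_four [Finite V] :
    (copiesOn (cycleGraph 4) V).ncard = 3 * (Nat.card V).choose 4 :=
  ncard_copiesOn_eq_three_mul_choose (Nat.card_fin 4) support_cycleGraph_four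
    card_iso_cycleGraph_four

lemma ncard_copiesOn_compl_cycleGraph_four [Finite V] :
    (copiesOn (cycleGraph 4)ᶜ V).ncard = 3 * (Nat.card V).choose 4 :=
  ncard_copiesOn_eq_three_mul_choose (Nat.card_fin 4) support_compl_cycleGraph_four
    ((card_iso_compl _).trans card_iso_cycleGraph_four)

variable {G : SimpleGraph V}

lemma not_isChordal_iff : ¬ IsChordal G ↔ ∃ n, 4 ≤ n ∧ cycleGraph n ⊴ G := by
  simp only [IsChordal, not_forall, not_isEmpty_iff, exists_prop, IsIndContained]

lemma not_isChordal_iff_cycleGraph_four (hG : ∀ n, 5 ≤ n → ¬ cycleGraph n ⊴ G) :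
    ¬ IsChordal G ↔ cycleGraph 4 ⊴ G := by
  rw [not_isChordal_iff]
  refine ⟨fun ⟨n, hn, hcycle⟩ ↦ ?_, fun h ↦ ⟨4, le_rfl, h⟩⟩
  obtain rfl | hlt := hn.eq_or_lt
  · exact hcycle
  · exact absurd hcycle (hG n hlt)

lemma ncard_edgeSet_eq_four_and_not_isChordal_iff [Finite V] :
    G.edgeSet.ncard = 4 ∧ ¬ IsChordal G ↔ G ∈ copiesOn (cycleGraph 4) V := by
  rw [mem_copiesOn_iff, ncard_edgeSet_cycleGraph (by decide)]
  refine and_congr_right fun hcard ↦ not_isChordal_iff_cycleGraph_four fun n hn hcycle ↦ ?_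
  have hle := ncard_edgeSet_le_of_isContained hcycle.isContained
  rw [ncard_edgeSet_cycleGraph (by lia)] at hle
  lia

lemma ncard_edgeSet_compl_eq_two_and_not_isChordal_iff [Finite V] :
    Gᶜ.edgeSet.ncard = 2 ∧ ¬ IsChordal G ↔ Gᶜ ∈ copiesOn (cycleGraph 4)ᶜ V := by
  rw [mem_copiesOn_iff, ncard_edgeSet_compl_cycleGraph_four, compl_isIndContained_compl]
  refine and_congr_right fun hcard ↦ not_isChordal_iff_cycleGraph_four fun n hn hcycle ↦ ?_
  have hle := ncard_edgeSet_le_of_isContained hcycle.compl.isContained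
  have hlt := two_lt_ncard_edgeSet_compl_cycleGraph hn
  lia

end FourCycle

lemma Fcount_four (p : ℕ) : Fcount p 4 = 3 * p.choose 4 := by
  simp only [Fcount, ncard_edgeSet_eq_four_and_not_isChordal_iff]
  exact ncard_copiesOn_cycleGraph_four.trans (by rw [Nat.card_fin])

lemma Fcount_of_add_two_eq {p k : ℕ} (hk : k + 2 = p.choose 2) :
    Fcount p k = 3 * p.choose 4 := by
  have hiff (G : SimpleGraph (Fin p)) :
      G.edgeSet.ncard = k ∧ ¬ IsChordal G ↔ Gᶜ ∈ copiesOn (cycleGraph 4)ᶜ (Fin p) := by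
    have hsum := ncard_edgeSet_add_ncard_edgeSet_compl G
    rw [Nat.card_fin] at hsum
    rw [← ncard_edgeSet_compl_eq_two_and_not_isChordal_iff]
    exact and_congr_left' (by lia)
  calc Fcount p k = (copiesOn (cycleGraph 4)ᶜ (Fin p)).ncard :=
        Nat.card_congr (compl_involutive.toPerm.subtypeEquiv hiff)
    _ = 3 * p.choose 4 := by rw [ncard_copiesOn_compl_cycleGraph_four, Nat.card_fin]

theorem F_p_r_sub_two (p : ℕ) (hp : 4 ≤ p) (r : ℕ) (hr : r = p * (p - 1) / 2) :
    Fcount p (r - 2) = Fcount p 4 ∧ Fcount p (r - 2) = 3 * Nat.choose p 4 := by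
  have hr_choose : r = p.choose 2 := hr.trans (Nat.choose_two_right p).symm
  have hr_six : 6 ≤ p.choose 2 := Nat.choose_le_choose 2 hp
  have hcount : Fcount p (r - 2) = 3 * p.choose 4 := Fcount_of_add_two_eq (by lia)
  exact ⟨hcount.trans (Fcount_four p).symm, hcount⟩
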